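/- (Lemma 2: construction of the local subdomain.) There exists r > 0 such that for every ε ∈ (0, r) there exists a graph-type subdomain D = D(ε), determined by some ρ₁ ∈ (0, ρ₀) and some C² function ℓ̃ : closure(B_{ρ₁}) → ℝ with ℓ̃ > 0 on B_{ρ₁} and ℓ̃ = 0, ∇ℓ̃ = 0 on {|x'| = ρ₁}, with the following properties: D ⊂ Ω; diam(D) < ε; 0 ∈ ∂D ∩ ∂Ω; the upper graph {(x', ℓ(x')) : |x'| < ρ₁} is contained in Γ ∩ ∂D; and for every H ∈ 𝓗 one has ⟨H(x', ℓ(x') − ℓ̃(x')), ν₂(x')⟩ ≤ 0 for all |x'| < ρ₁ (that is, H·ν ≤ 0 on ∂D ∖ Γ). Here r depends only on n, M, δ₀, ρ₀ and the C² norm of ℓ, and D is independent of the individual H ∈ 𝓗. -/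

import Mathlib

noncomputable section

open MeasureTheory Metric Set
open scoped RealInnerProductSpace

abbrev Esp (n : ℕ) : Type := EuclideanSpace ℝ (Fin n)

/-- The point `(x', xₙ) ∈ ℝ^{d+1} = ℝ^d × ℝ`. -/
noncomputable def graphMk (d : ℕ) (x' : Esp d) (xn : ℝ) : Esp (d+1) :=
  (EuclideanSpace.equiv (Fin (d+1)) ℝ).symm
    (Fin.snoc (⇑(EuclideanSpace.equiv (Fin d) ℝ) x') xn)

/-- `H` is `(M, δ₀)`-admissible on the compact set `K`. -/
def IsAdmissible {n : ℕ} (M δ₀ : ℝ) (K : Set (Esp n)) (H : Esp n → Esp n) : Prop :=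
  ∃ U : Set (Esp n), IsOpen U ∧ Convex ℝ U ∧ K ⊆ U ∧ ContDiffOn ℝ 1 H U ∧
    (∀ x ∈ U, ‖H x‖ ≤ M) ∧ (∀ x ∈ U, ‖fderiv ℝ H x‖ ≤ M) ∧ (∀ x ∈ K, δ₀ < ‖H x‖)

/-- `ψ_H(x) = ⟨x, H(x)⟩`. -/
noncomputable def psiW {n : ℕ} (H : Esp n → Esp n) (x : Esp n) : ℝ := ⟪x, H x⟫

/-- The Carleman weight `φ_H(x,t) = -βt + ψ_H(x)`. -/
noncomputable def phiW {n : ℕ} (β : ℝ) (H : Esp n → Esp n) (x : Esp n) (t : ℝ) : ℝ :=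
  -(β * t) + psiW H x

/-- Outward unit normal `ν₁` of the upper graph `xₙ = ℓ(x')`. -/
noncomputable def nuUp (d : ℕ) (ℓ : Esp d → ℝ) (x' : Esp d) : Esp (d+1) :=
  (Real.sqrt (1 + ‖gradient ℓ x'‖ ^ 2))⁻¹ • graphMk d (-(gradient ℓ x')) 1

/-- Outward unit normal `ν₂` of the lower graph `xₙ = m(x')`. -/
noncomputable def nuDown (d : ℕ) (m : Esp d → ℝ) (x' : Esp d) : Esp (d+1) :=
  (Real.sqrt (1 + ‖gradient m x'‖ ^ 2))⁻¹ • graphMk d (gradient m x') (-1)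

/-- Area element `ω(x') = √(1 + |∇m(x')|²)` of the graph of `m`. -/
noncomputable def omegaW (d : ℕ) (m : Esp d → ℝ) (x' : Esp d) : ℝ :=
  Real.sqrt (1 + ‖gradient m x'‖ ^ 2)

/-- The graph domain `D = {(x', xₙ) : |x'| < ρ₁, ℓ(x') − ℓ̃(x') < xₙ < ℓ(x')}`. -/
def graphDomain (d : ℕ) (ρ₁ : ℝ) (ℓ ℓt : Esp d → ℝ) : Set (Esp (d+1)) :=
  {x | ∃ x' : Esp d, ∃ xn : ℝ, ‖x'‖ < ρ₁ ∧ ℓ x' - ℓt x' < xn ∧ xn < ℓ x' ∧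
    x = graphMk d x' xn}

/-!
Cut off a thin cap below the graph of `ℓ` with the profile `ℓ̃(x') = (ρ² - |x'|²)²`, which vanishes
together with its gradient on `|x'| = ρ`. Every quantity to be controlled (the depth `ℓ̃`, the size of the cap,
the position of its lower face, the normal `ν₂`) depends jointly continuously on `(ρ, x')` near
`(0, 0)`, and `|x'| < ρ` forces `(ρ, x')` to be close to `(0, 0)` when `ρ` is small.
At `(0, 0)` the lower normal is `-ν₁(0)`, where `⟨H(0), -ν₁(0)⟩ < -δ₀`; the deviation of
`⟨H, ν₂⟩` from this value is at most `L |y| + M |ν₂ - (-ν₁(0))|` at a point `y` of the lower face,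
a bound which involves `H` only through its Lipschitz constant `L` and its bound `M`.
-/

open Filter Topology
open scoped ContDiff NNReal

section NormedSpace

variable {E : Type*} [SeminormedAddCommGroup E]

lemma eventually_forall_norm_lt {P : ℝ × E → Prop} (hP : ∀ᶠ p in 𝓝 0, P p) :
    ∀ᶠ ρ in 𝓝 (0 : ℝ), ∀ x : E, ‖x‖ < ρ → P (ρ, x) := by
  obtain ⟨σ, hσ, hball⟩ := Metric.eventually_nhds_iff.1 hP
  filter_upwards [Metric.ball_mem_nhds 0 hσ] with ρ hρ x hx
  rw [mem_ball_zero_iff] at hρ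
  exact hball <| by
    simpa only [dist_zero_right, Prod.norm_def, max_lt_iff] using
      ⟨hρ, hx.trans ((le_abs_self ρ).trans_lt hρ)⟩

variable [InnerProductSpace ℝ E]

lemma real_inner_le_inner_add_norm_sub (v v₀ w w₀ : E) :
    ⟪v, w⟫ ≤ ⟪v₀, w₀⟫ + ‖v - v₀‖ * ‖w₀‖ + ‖v‖ * ‖w - w₀‖ := by
  have hsplit : ⟪v, w⟫ = ⟪v₀, w₀⟫ + ⟪v - v₀, w₀⟫ + ⟪v, w - w₀⟫ := by
    rw [inner_sub_left, inner_sub_right]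
    ring
  rw [hsplit]
  gcongr <;> exact real_inner_le_norm _ _

end NormedSpace

section Gradient

variable {E : Type*} [NormedAddCommGroup E] [InnerProductSpace ℝ E] [CompleteSpace E]

lemma gradient_fun_sub {f g : E → ℝ} {x : E} (hf : DifferentiableAt ℝ f x)
    (hg : DifferentiableAt ℝ g x) :
    gradient (fun z => f z - g z) x = gradient f x - gradient g x := by
  simp only [gradient, fderiv_fun_sub hf hg, map_sub]

lemma continuousAt_gradient {f : E → ℝ} {x : E} (hf : ContDiffAt ℝ 1 f x) :
    ContinuousAt (gradient f) x :=
  (InnerProductSpace.toDual ℝ E).symm.continuous.continuousAt.comp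
    (hf.continuousAt_fderiv one_ne_zero)

end Gradient

section BumpProfile

variable {E : Type*} [SeminormedAddCommGroup E]

/-- The depth `ℓ̃(x) = (ρ² - |x|²)²` of the local subdomain over the ball of radius `ρ`; the square
makes its gradient vanish on the sphere `|x| = ρ` as well. -/
def bumpProfile (ρ : ℝ) (x : E) : ℝ := (ρ ^ 2 - ‖x‖ ^ 2) ^ 2

lemma bumpProfile_pos {ρ : ℝ} {x : E} (hx : ‖x‖ < ρ) : 0 < bumpProfile ρ x :=
  pow_pos (sub_pos.2 (pow_lt_pow_left₀ hx (norm_nonneg x) two_ne_zero)) 2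

lemma bumpProfile_of_norm_eq {ρ : ℝ} {x : E} (hx : ‖x‖ = ρ) : bumpProfile ρ x = 0 := by
  simp [bumpProfile, hx]

lemma bumpProfile_zero_zero : bumpProfile 0 (0 : E) = 0 :=
  bumpProfile_of_norm_eq norm_zero

lemma continuous_bumpProfile : Continuous fun p : ℝ × E => bumpProfile p.1 p.2 := by
  unfold bumpProfile
  fun_prop

end BumpProfile

section BumpProfileGradient

variable {E : Type*} [NormedAddCommGroup E] [InnerProductSpace ℝ E]

lemma contDiff_bumpProfile (ρ : ℝ) {k : WithTop ℕ∞} : ContDiff ℝ k (bumpProfile ρ : E → ℝ) :=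
  (contDiff_const.sub (contDiff_norm_sq ℝ)).pow 2

variable [CompleteSpace E]

lemma gradient_bumpProfile (ρ : ℝ) (x : E) :
    gradient (bumpProfile ρ) x = (-4 * (ρ ^ 2 - ‖x‖ ^ 2)) • x := by
  refine HasGradientAt.gradient (hasGradientAt_iff_hasFDerivAt.2 ?_)
  refine (((hasStrictFDerivAt_norm_sq x).hasFDerivAt.const_sub (ρ ^ 2)).pow 2).congr_fderiv ?_
  ext y
  simp only [Nat.add_one_sub_one, pow_one, nsmul_eq_mul, Nat.cast_ofNat, smul_neg, neg_apply,
    smul_apply, coe_innerSL_apply, smul_eq_mul, neg_mul, neg_smul, map_neg, map_smul,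
    InnerProductSpace.toDual_apply_apply, neg_inj]
  ring

lemma gradient_bumpProfile_of_norm_eq {ρ : ℝ} {x : E} (hx : ‖x‖ = ρ) :
    gradient (bumpProfile ρ) x = 0 := by
  simp [gradient_bumpProfile, hx]

lemma tendsto_gradient_sub_bumpProfile {f : E → ℝ} (hf : ContDiffAt ℝ 1 f 0) :
    Tendsto (fun p : ℝ × E => gradient (fun z => f z - bumpProfile p.1 z) p.2) (𝓝 0)
      (𝓝 (gradient f 0)) := by
  have hsnd : Tendsto (Prod.snd : ℝ × E → E) (𝓝 0) (𝓝 0) := continuous_snd.tendsto 0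
  have hdiff : ∀ᶠ p : ℝ × E in 𝓝 0, DifferentiableAt ℝ f p.2 :=
    hsnd.eventually ((hf.eventually (by simp)).mono fun _ h => h.differentiableAt one_ne_zero)
  have hbump : Tendsto (fun p : ℝ × E => (-4 * (p.1 ^ 2 - ‖p.2‖ ^ 2)) • p.2) (𝓝 0) (𝓝 0) :=
    Continuous.tendsto' (by fun_prop) _ _ (by simp)
  have hlim := ((continuousAt_gradient hf).tendsto.comp hsnd).sub hbump
  rw [sub_zero] at hlim
  refine hlim.congr' (hdiff.mono fun p hp => ?_)
  have hp' := (contDiff_bumpProfile p.1).differentiable one_ne_zero p.2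
  simp only [gradient_fun_sub hp hp', gradient_bumpProfile, Function.comp_apply]

end BumpProfileGradient

section Graph

variable {d : ℕ}

lemma continuous_graphMk : Continuous fun p : Esp d × ℝ => graphMk d p.1 p.2 := by
  unfold graphMk
  fun_prop

lemma graphMk_zero : graphMk d 0 0 = 0 := by
  ext i
  refine Fin.lastCases ?_ (fun j => ?_) i <;> simp [graphMk]

lemma neg_graphMk (x : Esp d) (t : ℝ) : -graphMk d x t = graphMk d (-x) (-t) := by
  ext i
  refine Fin.lastCases ?_ (fun j => ?_) i <;> simp [graphMk]

lemma graphMk_inj {x y : Esp d} {s t : ℝ} : graphMk d x s = graphMk d y t ↔ x = y ∧ s = t := by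
  simp [graphMk, Fin.snoc_inj]

lemma norm_graphMk (x : Esp d) (t : ℝ) : ‖graphMk d x t‖ = √(‖x‖ ^ 2 + t ^ 2) := by
  rw [EuclideanSpace.norm_eq]
  simp [EuclideanSpace.norm_sq_eq, Fin.sum_univ_castSucc, graphMk]

lemma norm_graphMk_le (x : Esp d) (t : ℝ) : ‖graphMk d x t‖ ≤ ‖x‖ + |t| := by
  rw [norm_graphMk, Real.sqrt_le_left (by positivity), add_sq, sq_abs]
  linarith [show 0 ≤ 2 * ‖x‖ * |t| by positivity]

lemma graphMk_mem_frontier {S : Set (Esp (d + 1))} {x : Esp d} {a b : ℝ} (hab : a < b)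
    (hbelow : ∀ t ∈ Ioo a b, graphMk d x t ∈ S) (htop : graphMk d x b ∉ S) :
    graphMk d x b ∈ frontier S := by
  have hb : b ∈ closure (Ioo a b) := by
    rw [closure_Ioo hab.ne]
    exact right_mem_Icc.2 hab.le
  exact ⟨map_mem_closure (continuous_graphMk.comp (.prodMk_right x)) hb hbelow,
    fun h => htop (interior_subset h)⟩

lemma graphMk_mem_frontier_graphDomain {ρ : ℝ} {ℓ ℓt : Esp d → ℝ} {x : Esp d} (hx : ‖x‖ < ρ)
    (hpos : 0 < ℓt x) : graphMk d x (ℓ x) ∈ frontier (graphDomain d ρ ℓ ℓt) := by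
  refine graphMk_mem_frontier (sub_lt_self (ℓ x) hpos) (fun t ht => ⟨x, t, hx, ht.1, ht.2, rfl⟩) ?_
  rintro ⟨y, t, -, -, hlt, heq⟩
  obtain ⟨rfl, rfl⟩ := graphMk_inj.1 heq
  exact lt_irrefl _ hlt

lemma graphDomain_subset_closedBall {ρ R : ℝ} {ℓ ℓt : Esp d → ℝ}
    (hR : ∀ x, ‖x‖ < ρ → ‖x‖ + (|ℓ x| + ℓt x) ≤ R) :
    graphDomain d ρ ℓ ℓt ⊆ closedBall 0 R := by
  rintro _ ⟨x, t, hx, hlow, hupp, rfl⟩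
  have ht : |t| ≤ |ℓ x| + ℓt x :=
    abs_le.2 ⟨by linarith [neg_abs_le (ℓ x)], by linarith [le_abs_self (ℓ x)]⟩
  rw [mem_closedBall_zero_iff]
  exact (norm_graphMk_le x t).trans <| (add_le_add_right ht _).trans (hR x hx)

lemma nuUp_eq_neg_nuDown (ℓ : Esp d → ℝ) (x : Esp d) : nuUp d ℓ x = -nuDown d ℓ x := by
  rw [nuUp, nuDown, ← smul_neg, neg_graphMk, neg_neg]

lemma norm_nuDown (m : Esp d → ℝ) (x : Esp d) : ‖nuDown d m x‖ = 1 := by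
  have hpos : 0 < √(1 + ‖gradient m x‖ ^ 2) := by positivity
  rw [nuDown, norm_smul, norm_graphMk, neg_one_sq, add_comm (_ ^ 2), norm_inv,
    Real.norm_of_nonneg hpos.le, inv_mul_cancel₀ hpos.ne']

lemma tendsto_nuDown {ι : Type*} {l : Filter ι} {m : ι → Esp d → ℝ} {x : ι → Esp d}
    {m₀ : Esp d → ℝ} {x₀ : Esp d}
    (h : Tendsto (fun i => gradient (m i) (x i)) l (𝓝 (gradient m₀ x₀))) :
    Tendsto (fun i => nuDown d (m i) (x i)) l (𝓝 (nuDown d m₀ x₀)) := by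
  have hinv : Continuous fun g : Esp d => (√(1 + ‖g‖ ^ 2))⁻¹ :=
    Continuous.inv₀ (by fun_prop) fun g => by positivity
  have hcont : Continuous fun g : Esp d => (√(1 + ‖g‖ ^ 2))⁻¹ • graphMk d g (-1) :=
    hinv.smul (continuous_graphMk.comp (.prodMk_left (-1)))
  exact (hcont.tendsto _).comp h

lemma inner_nuDown_nonpos {δ₀ : ℝ} {ℓ m : Esp d → ℝ} {x₀ x : Esp d} {v v₀ : Esp (d + 1)}
    (hv₀ : δ₀ < ⟪v₀, nuUp d ℓ x₀⟫)
    (hdev : ‖v - v₀‖ + ‖v‖ * ‖nuDown d m x - nuDown d ℓ x₀‖ ≤ δ₀) :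
    ⟪v, nuDown d m x⟫ ≤ 0 := by
  rw [nuUp_eq_neg_nuDown, inner_neg_right] at hv₀
  have hle := real_inner_le_inner_add_norm_sub v v₀ (nuDown d m x) (nuDown d ℓ x₀)
  rw [norm_nuDown, mul_one] at hle
  linarith

end Graph

namespace IsAdmissible

variable {n : ℕ} {M δ₀ : ℝ} {K : Set (Esp n)} {H : Esp n → Esp n}

lemma norm_le (hH : IsAdmissible M δ₀ K H) : ∀ x ∈ K, ‖H x‖ ≤ M := by
  obtain ⟨U, -, -, hKU, -, hbound, -, -⟩ := hH
  exact fun x hx => hbound x (hKU hx)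

lemma lipschitzOnWith (hH : IsAdmissible M δ₀ K H) : LipschitzOnWith M.toNNReal H K := by
  obtain ⟨U, hUopen, hUconv, hKU, hdiff, -, hderiv, -⟩ := hH
  refine (hUconv.lipschitzOnWith_of_nnnorm_fderiv_le (𝕜 := ℝ) (fun x hx => ?_)
    fun x hx => NNReal.le_toNNReal_of_coe_le (hderiv x hx)).mono hKU
  exact (hdiff.contDiffAt (hUopen.mem_nhds hx)).differentiableAt one_ne_zero

end IsAdmissible

section SmallCaps

variable {d : ℕ} {ℓ : Esp d → ℝ}

lemma eventually_bumpProfile_lt {E : Type*} [SeminormedAddCommGroup E] {c : ℝ} (hc : 0 < c) :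
    ∀ᶠ ρ in 𝓝 (0 : ℝ), ∀ x : E, ‖x‖ < ρ → bumpProfile ρ x < c :=
  eventually_forall_norm_lt <|
    (continuous_bumpProfile.tendsto' 0 0 bumpProfile_zero_zero).eventually_lt_const hc

lemma eventually_graphDomain_subset_closedBall (hℓ : ContinuousAt ℓ 0) (hℓ0 : ℓ 0 = 0) {R : ℝ}
    (hR : 0 < R) : ∀ᶠ ρ in 𝓝 0, graphDomain d ρ ℓ (bumpProfile ρ) ⊆ closedBall 0 R := by
  have hlim : Tendsto (fun p : ℝ × Esp d => ‖p.2‖ + (|ℓ p.2| + bumpProfile p.1 p.2)) (𝓝 0)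
      (𝓝 0) := by
    have hℓ' : ContinuousAt (fun p : ℝ × Esp d => ℓ p.2) 0 :=
      hℓ.comp_of_eq continuousAt_snd rfl
    have hcont : ContinuousAt (fun p : ℝ × Esp d => ‖p.2‖ + (|ℓ p.2| + bumpProfile p.1 p.2)) 0 :=
      continuousAt_snd.norm.add (hℓ'.abs.add continuous_bumpProfile.continuousAt)
    simpa [ContinuousAt, hℓ0, bumpProfile_zero_zero] using hcont
  filter_upwards [eventually_forall_norm_lt (hlim.eventually_le_const hR)] with ρ hρ
  exact graphDomain_subset_closedBall hρ

lemma tendsto_graphMk_sub_bumpProfile (hℓ : ContinuousAt ℓ 0) (hℓ0 : ℓ 0 = 0) :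
    Tendsto (fun p : ℝ × Esp d => graphMk d p.2 (ℓ p.2 - bumpProfile p.1 p.2)) (𝓝 0) (𝓝 0) := by
  have hℓ' : ContinuousAt (fun p : ℝ × Esp d => ℓ p.2) 0 :=
    hℓ.comp_of_eq continuousAt_snd rfl
  have hcont : ContinuousAt
      (fun p : ℝ × Esp d => graphMk d p.2 (ℓ p.2 - bumpProfile p.1 p.2)) 0 :=
    continuous_graphMk.continuousAt.comp
      (continuousAt_snd.prodMk (hℓ'.sub continuous_bumpProfile.continuousAt))
  simpa [ContinuousAt, hℓ0, bumpProfile_zero_zero, graphMk_zero] using hcont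

lemma eventually_lowerFace_deviation_lt (hℓ : ContDiffAt ℝ 1 ℓ 0) (hℓ0 : ℓ 0 = 0) (L M : ℝ)
    {δ₀ : ℝ} (hδ₀ : 0 < δ₀) :
    ∀ᶠ ρ in 𝓝 (0 : ℝ), ∀ x : Esp d, ‖x‖ < ρ →
      L * ‖graphMk d x (ℓ x - bumpProfile ρ x)‖ +
        M * ‖nuDown d (fun z => ℓ z - bumpProfile ρ z) x - nuDown d ℓ 0‖ < δ₀ := by
  have hpoint := (tendsto_graphMk_sub_bumpProfile hℓ.continuousAt hℓ0).norm.const_mul L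
  have hnormal := (tendsto_nuDown (tendsto_gradient_sub_bumpProfile hℓ)).sub_const (nuDown d ℓ 0)
  have hlim := hpoint.add (hnormal.norm.const_mul M)
  simp only [sub_self, norm_zero, mul_zero, add_zero] at hlim
  exact eventually_forall_norm_lt (hlim.eventually_lt_const hδ₀)

lemma eventually_inner_nuDown_nonpos (hℓ : ContDiffAt ℝ 1 ℓ 0) (hℓ0 : ℓ 0 = 0) (L : ℝ≥0) (M : ℝ)
    {δ₀ : ℝ} (hδ₀ : 0 < δ₀) :
    ∀ᶠ ρ in 𝓝 (0 : ℝ), ∀ (K : Set (Esp (d + 1))) (H : Esp (d + 1) → Esp (d + 1)), 0 ∈ K →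
      LipschitzOnWith L H K → (∀ y ∈ K, ‖H y‖ ≤ M) → δ₀ < ⟪H 0, nuUp d ℓ 0⟫ →
      ∀ x : Esp d, ‖x‖ < ρ → graphMk d x (ℓ x - bumpProfile ρ x) ∈ K →
        ⟪H (graphMk d x (ℓ x - bumpProfile ρ x)),
          nuDown d (fun z => ℓ z - bumpProfile ρ z) x⟫ ≤ 0 := by
  filter_upwards [eventually_lowerFace_deviation_lt hℓ hℓ0 L M hδ₀]
    with ρ hρ K H h0 hLip hbound hH0 x hx hy
  refine inner_nuDown_nonpos hH0 (le_trans ?_ (hρ x hx).le)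
  gcongr
  · simpa only [dist_eq_norm, sub_zero] using hLip.dist_le_mul _ hy 0 h0
  · exact hbound _ hy

end SmallCaps

theorem lemma2_construction_local_subdomain_general
    {d : ℕ} {ρ₀ δ₀ c : ℝ} (L : ℝ≥0) (M : ℝ) (hρ₀ : 0 < ρ₀) (hδ₀ : 0 < δ₀) (hc : 0 < c)
    {ℓ : Esp d → ℝ} (hℓ : ContDiffAt ℝ 1 ℓ 0) (hℓ0 : ℓ 0 = 0)
    {Ω : Set (Esp (d + 1))} (h0Ω : 0 ∉ Ω)
    (hΩsub : ∀ (x : Esp d) (t : ℝ), ‖x‖ < ρ₀ → ℓ x - c < t → t < ℓ x → graphMk d x t ∈ Ω)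
    {ε : ℝ} (hε : 0 < ε) :
    ∃ ρ₁ ∈ Ioo 0 ρ₀, ∃ ℓt : Esp d → ℝ, ContDiff ℝ ω ℓt ∧
      (∀ x, ‖x‖ < ρ₁ → 0 < ℓt x) ∧
      (∀ x, ‖x‖ = ρ₁ → ℓt x = 0 ∧ gradient ℓt x = 0) ∧
      graphDomain d ρ₁ ℓ ℓt ⊆ Ω ∧
      diam (graphDomain d ρ₁ ℓ ℓt) < ε ∧
      0 ∈ frontier (graphDomain d ρ₁ ℓ ℓt) ∩ frontier Ω ∧
      (∀ x, ‖x‖ < ρ₁ → graphMk d x (ℓ x) ∈ frontier (graphDomain d ρ₁ ℓ ℓt)) ∧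
      ∀ H : Esp (d + 1) → Esp (d + 1), LipschitzOnWith L H (closure Ω) →
        (∀ y ∈ closure Ω, ‖H y‖ ≤ M) → δ₀ < ⟪H 0, nuUp d ℓ 0⟫ → ∀ x, ‖x‖ < ρ₁ →
          ⟪H (graphMk d x (ℓ x - ℓt x)), nuDown d (fun z => ℓ z - ℓt z) x⟫ ≤ 0 := by
  have hfrontierΩ : (0 : Esp (d + 1)) ∈ frontier Ω := by
    rw [← graphMk_zero] at h0Ω ⊢
    exact graphMk_mem_frontier (neg_lt_zero.2 hc)
      (fun t ht => hΩsub 0 t (by simpa) (by simpa [hℓ0] using ht.1) (by simpa [hℓ0] using ht.2)) h0Ω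
  have hε₃ : 0 < ε / 3 := by positivity
  have hsmall := (eventually_bumpProfile_lt (E := Esp d) hc).and <|
    (eventually_graphDomain_subset_closedBall hℓ.continuousAt hℓ0 hε₃).and <|
      eventually_inner_nuDown_nonpos hℓ hℓ0 L M hδ₀
  obtain ⟨ρ, ⟨hdepth, hball, hsign⟩, hρ⟩ :=
    ((hsmall.filter_mono nhdsWithin_le_nhds).and (Ioo_mem_nhdsGT hρ₀)).exists
  have hupper (x : Esp d) (hx : ‖x‖ < ρ) :
      graphMk d x (ℓ x) ∈ frontier (graphDomain d ρ ℓ (bumpProfile ρ)) :=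
    graphMk_mem_frontier_graphDomain hx (bumpProfile_pos hx)
  refine ⟨ρ, hρ, bumpProfile ρ, contDiff_bumpProfile ρ, fun x hx => bumpProfile_pos hx,
    fun x hx => ⟨bumpProfile_of_norm_eq hx, gradient_bumpProfile_of_norm_eq hx⟩, ?_, ?_,
    ⟨?_, hfrontierΩ⟩, hupper, fun H hLip hbound hH0 x hx =>
      hsign _ H (frontier_subset_closure hfrontierΩ) hLip hbound hH0 x hx (subset_closure ?_)⟩
  · rintro _ ⟨x, t, hx, hlow, hupp, rfl⟩
    exact hΩsub x t (hx.trans hρ.2) (by linarith [hdepth x hx]) hupp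
  · linarith [diam_le_of_subset_closedBall hε₃.le hball]
  · simpa [hℓ0, graphMk_zero] using hupper 0 (by simpa using hρ.1)
  · exact hΩsub x _ (hx.trans hρ.2) (by linarith [hdepth x hx])
      (sub_lt_self _ (bumpProfile_pos hx))

/-- **Lemma 2** (construction of the local subdomain). -/
theorem lemma2_construction_local_subdomain
    (d : ℕ) (hd : 1 ≤ d) (ρ₀ M δ₀ c : ℝ)
    (hρ₀ : 0 < ρ₀) (hM : 0 < M) (hδ₀ : 0 < δ₀) (hc : 0 < c)
    (ℓ : Esp d → ℝ) (hℓ : ContDiffOn ℝ 2 ℓ (closedBall 0 ρ₀)) (hℓ0 : ℓ 0 = 0)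
    (Ω : Set (Esp (d+1))) (hΩo : IsOpen Ω) (hΩb : Bornology.IsBounded Ω)
    (hΩsub : ∀ (x' : Esp d) (xn : ℝ), ‖x'‖ < ρ₀ → ℓ x' - c < xn → xn < ℓ x' →
      graphMk d x' xn ∈ Ω)
    (hΩdis : ∀ (x' : Esp d) (xn : ℝ), ‖x'‖ < ρ₀ → ℓ x' ≤ xn → xn < ℓ x' + c →
      graphMk d x' xn ∉ Ω)
 :
    ∃ r > (0:ℝ), ∀ ε ∈ Set.Ioo (0:ℝ) r, ∃ ρ₁ ∈ Set.Ioo 0 ρ₀, ∃ ℓt : Esp d → ℝ,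
      ContDiffOn ℝ 2 ℓt (closedBall 0 ρ₁) ∧
      (∀ x' : Esp d, ‖x'‖ < ρ₁ → 0 < ℓt x') ∧
      (∀ x' : Esp d, ‖x'‖ = ρ₁ → ℓt x' = 0 ∧ gradient ℓt x' = 0) ∧
      graphDomain d ρ₁ ℓ ℓt ⊆ Ω ∧
      Metric.diam (graphDomain d ρ₁ ℓ ℓt) < ε ∧
      (0 : Esp (d+1)) ∈ frontier (graphDomain d ρ₁ ℓ ℓt) ∩ frontier Ω ∧
      (∀ x' : Esp d, ‖x'‖ < ρ₁ →
        graphMk d x' (ℓ x') ∈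
          {y : Esp (d+1) | ∃ z : Esp d, ‖z‖ < ρ₀ ∧ y = graphMk d z (ℓ z)} ∩
            frontier (graphDomain d ρ₁ ℓ ℓt)) ∧
      ∀ H : Esp (d+1) → Esp (d+1),
        IsAdmissible M δ₀ (closure Ω) H → δ₀ < ⟪H 0, nuUp d ℓ 0⟫ →
        ∀ x' : Esp d, ‖x'‖ < ρ₁ →
          ⟪H (graphMk d x' (ℓ x' - ℓt x')), nuDown d (fun z => ℓ z - ℓt z) x'⟫ ≤ 0 := by
  have hℓ' : ContDiffAt ℝ 1 ℓ 0 :=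
    (hℓ.contDiffAt (closedBall_mem_nhds 0 hρ₀)).of_le one_le_two
  have h0Ω : (0 : Esp (d + 1)) ∉ Ω := by
    simpa [graphMk_zero] using hΩdis 0 0 (by simpa) hℓ0.le (by simpa [hℓ0])
  refine ⟨1, one_pos, fun ε hε => ?_⟩
  obtain ⟨ρ₁, hρ₁, ℓt, hsmooth, hpos, hbdry, hsub, hdiam, hzero, hupper, hsign⟩ :=
    lemma2_construction_local_subdomain_general M.toNNReal M hρ₀ hδ₀ hc hℓ' hℓ0 h0Ω hΩsub hε.1
  exact ⟨ρ₁, hρ₁, ℓt, (hsmooth.of_le le_top).contDiffOn, hpos, hbdry, hsub, hdiam, hzero,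
    fun x hx => ⟨⟨x, hx.trans hρ₁.2, rfl⟩, hupper x hx⟩,
    fun H hH => hsign H hH.lipschitzOnWith hH.norm_le⟩
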